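/- Let Δ ≥ 3 be an integer and let ε be a real number with 0 < ε ≤ Δ − 2. Then for every real δ > 0 there exists an integer n₀ such that every finite connected graph G of maximum degree at most Δ, of order n ≥ n₀, and with isoperimetric number h(G) ≥ ε satisfies c(G) ≤ n^{1 − (1/2)·log_{Δ−1}(1+ε/Δ) + δ}. -/

import Mathlib

/-!
The game of cops and robbers on a (finite connected) simple graph `G`:
first the `k` cops choose starting vertices, then the robber chooses a starting
vertex (knowing the cops' positions); the players alternate turns (cops first),
each cop may stay or move to an adjacent vertex, and the robber may stay or move
to an adjacent vertex.  The cops win if at some moment a cop occupies the same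
vertex as the robber.  The cop number is the least `k` for which the cops have
a winning strategy.
-/

variable {V : Type*}

/-- A (positional) strategy for a team of `k` cops on the graph `G`: an initial
placement, and a move function which, given the current cop positions and the
robber's position, tells each cop to stay or move to an adjacent vertex. -/
structure CopStrategy (G : SimpleGraph V) (k : ℕ) where
  init : Fin k → V
  move : (Fin k → V) → V → (Fin k → V)
  valid : ∀ c r i, move c r i = c i ∨ G.Adj (c i) (move c r i)

/-- A (positional) strategy for the robber on the graph `G` against `k` cops:
an initial placement depending on the cops' initial positions, and a move
function which, given the current cop positions and the robber's position,
makes the robber stay or move to an adjacent vertex. -/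
structure RobberStrategy (G : SimpleGraph V) (k : ℕ) where
  init : (Fin k → V) → V
  move : (Fin k → V) → V → V
  valid : ∀ c r, move c r = r ∨ G.Adj r (move c r)

/-- The sequence of game positions (cop positions, robber position) produced by a
cop strategy and a robber strategy; `play CS RS n` is the position after `n`
full rounds (a round being a cop move followed by a robber move). -/
def play {G : SimpleGraph V} {k : ℕ} (CS : CopStrategy G k) (RS : RobberStrategy G k) :
    ℕ → (Fin k → V) × V
  | 0 => (CS.init, RS.init CS.init)
  | n + 1 =>
      (CS.move (play CS RS n).1 (play CS RS n).2,
       RS.move (CS.move (play CS RS n).1 (play CS RS n).2) (play CS RS n).2)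

/-- The cops win with `k` cops if they have a strategy capturing the robber
(occupying the robber's vertex, either right after the robber's move or right
after the cops' own move) against every robber strategy. -/
def CopsWin (G : SimpleGraph V) (k : ℕ) : Prop :=
  ∃ CS : CopStrategy G k, ∀ RS : RobberStrategy G k,
    ∃ n, (∃ i, (play CS RS n).1 i = (play CS RS n).2) ∨
         (∃ i, (play CS RS (n + 1)).1 i = (play CS RS n).2)

/-- The cop number of `G`: the least number of cops having a winning strategy. -/
noncomputable def copNumber (G : SimpleGraph V) : ℕ := sInf {k | CopsWin G k}

/-- The edge boundary `δS` of a vertex set `S`: the set of edges of `G` with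
exactly one endpoint in `S`. -/
def edgeBoundary (G : SimpleGraph V) (S : Set V) : Set (Sym2 V) :=
  {e | e ∈ G.edgeSet ∧ ∃ u v : V, e = s(u, v) ∧ u ∈ S ∧ v ∉ S}

/-- The isoperimetric number `h(G)`: the minimum of `|δS| / |S|` over nonempty
vertex sets `S` with `|S| ≤ n/2`, where `n` is the order of `G`. -/
noncomputable def isoperimetricNumber [Fintype V] (G : SimpleGraph V) : ℝ :=
  sInf {x : ℝ | ∃ S : Set V, S.Nonempty ∧
    (S.ncard : ℝ) ≤ (Fintype.card V : ℝ) / 2 ∧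
    x = ((edgeBoundary G S).ncard : ℝ) / (S.ncard : ℝ)}

/-- If some placement of the cops wins in the bounded-horizon game, the cops win. -/
def WinIn (G : SimpleGraph V) {k : ℕ} : ℕ → (Fin k → V) → V → Prop
  | 0, c, r => ∃ i, c i = r
  | m + 1, c, r => ∃ c' : Fin k → V, (∀ i, c' i = c i ∨ G.Adj (c i) (c' i)) ∧
      ∀ r', (r' = r ∨ G.Adj r r') → WinIn G m c' r'

theorem copsWin_of_winIn (G : SimpleGraph V) {k : ℕ} (c0 : Fin k → V)
    (h : ∀ r, ∃ m, WinIn G m c0 r) : CopsWin G k := by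
  classical
  have key : ∀ (c : Fin k → V) (r : V), ∃ c' : Fin k → V,
      (∀ i, c' i = c i ∨ G.Adj (c i) (c' i)) ∧
      ((∃ m, WinIn G m c r) → (∃ i, c i = r) ∨
        ∃ m, (∀ m' ≤ m, ¬ WinIn G m' c r) ∧ WinIn G (m + 1) c r ∧
          ∀ r', (r' = r ∨ G.Adj r r') → WinIn G m c' r') := by
    intro c r
    by_cases hw : ∃ m, WinIn G m c r
    · have h1 := Nat.find_spec hw
      have h2 := fun m' => Nat.find_min (m := m') hw
      generalize Nat.find hw = M at h1 h2
      cases M with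
      | zero => exact ⟨c, fun i => Or.inl rfl, fun _ => Or.inl h1⟩
      | succ m =>
        obtain ⟨c', hc, hr⟩ := h1
        exact ⟨c', hc, fun _ => Or.inr ⟨m, fun m' hm' => h2 m' (by omega), ⟨c', hc, hr⟩, hr⟩⟩
    · exact ⟨c, fun i => Or.inl rfl, fun h => absurd h hw⟩
  choose mv hmv hmv2 using key
  refine ⟨⟨c0, mv, hmv⟩, fun RS => ?_⟩
  set CS : CopStrategy G k := ⟨c0, mv, hmv⟩ with hCS
  suffices H : ∀ m n, WinIn G m (play CS RS n).1 (play CS RS n).2 →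
      ∃ n, ∃ i, (play CS RS n).1 i = (play CS RS n).2 by
    obtain ⟨m, hm⟩ := h (RS.init c0)
    obtain ⟨n, hn⟩ := H m 0 hm
    exact ⟨n, Or.inl hn⟩
  intro m
  induction m using Nat.strong_induction_on with
  | _ m ih =>
    intro n hn
    rcases hmv2 _ _ ⟨m, hn⟩ with h0 | ⟨m', hlt, _, hr⟩
    · exact ⟨n, h0⟩
    · have : m' < m := by
        by_contra hc
        exact hlt m (by omega) hn
      refine ih m' this (n + 1) ?_
      exact hr _ (RS.valid _ _)

/-- Reachability by a lazy walk of length `m`. -/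
def Reach (G : SimpleGraph V) : ℕ → V → V → Prop
  | 0, x, u => x = u
  | m + 1, x, u => ∃ y, (y = x ∨ G.Adj x y) ∧ Reach G m y u

theorem reach_refl (G : SimpleGraph V) (m : ℕ) (x : V) : Reach G m x x := by
  induction m with
  | zero => rfl
  | succ m ih => exact ⟨x, Or.inl rfl, ih⟩

theorem reach_last (G : SimpleGraph V) (m : ℕ) (v u : V) (h : Reach G (m + 1) v u) :
    u = v ∨ ∃ y, Reach G m v y ∧ G.Adj y u := by
  induction m generalizing v with
  | zero =>
    obtain ⟨y, hy, rfl : y = u⟩ := h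
    rcases hy with rfl | hy
    · exact Or.inl rfl
    · exact Or.inr ⟨v, rfl, hy⟩
  | succ m ih =>
    obtain ⟨y, hy, hu⟩ := h
    rcases ih y hu with rfl | ⟨z, hz, hzu⟩
    · rcases hy with rfl | hy
      · exact Or.inl rfl
      · exact Or.inr ⟨v, reach_refl G _ v, hy⟩
    · exact Or.inr ⟨z, ⟨y, hy, hz⟩, hzu⟩

theorem winIn_of_assign (G : SimpleGraph V) {k : ℕ} (m : ℕ) (c : Fin k → V) (v : V)
    (g : V → Fin k) (hinj : ∀ u u', Reach G m v u → Reach G m v u' → g u = g u' → u = u')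
    (hg : ∀ u, Reach G m v u → Reach G m (c (g u)) u) : WinIn G m c v := by
  induction m generalizing c v with
  | zero => exact ⟨g v, hg v rfl⟩
  | succ m ih =>
    have key : ∀ i, ∃ y, (y = c i ∨ G.Adj (c i) y) ∧
        ∀ u, Reach G (m + 1) v u → g u = i → Reach G m y u := by
      intro i
      by_cases hi : ∃ u, Reach G (m + 1) v u ∧ g u = i
      · obtain ⟨u, hu, rfl⟩ := hi
        obtain ⟨y, hy, hyu⟩ := hg u hu
        refine ⟨y, hy, fun u' hu' he => ?_⟩
        rw [hinj u' u hu' hu he]; exact hyu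
      · exact ⟨c i, Or.inl rfl, fun u hu he => absurd ⟨u, hu, he⟩ hi⟩
    choose c' hc' hc2 using key
    refine ⟨c', hc', fun r' hr' => ?_⟩
    have up : ∀ u, Reach G m r' u → Reach G (m + 1) v u := fun u hu => ⟨r', hr', hu⟩
    exact ih c' r' (fun u u' hu hu' => hinj u u' (up u hu) (up u' hu'))
      (fun u hu => hc2 _ u (up u hu) rfl)

open Classical in
/-- Vertices which reach the set `A` in `m` lazy steps. -/
noncomputable def reachSet [Fintype V] (G : SimpleGraph V) (m : ℕ) (A : Finset V) : Finset V :=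
  Finset.univ.filter (fun x => ∃ u ∈ A, Reach G m x u)

open Classical in
theorem copsWin_of_hall [Fintype V] (G : SimpleGraph V) {k : ℕ} (m M : ℕ) (c : Fin k → V)
    (hM : ∀ v, (Finset.univ.filter (fun u => Reach G m v u)).card ≤ M)
    (hc : ∀ A : Finset V, A.card ≤ M →
      A.card ≤ (Finset.univ.filter (fun i => c i ∈ reachSet G m A)).card) : CopsWin G k := by
  refine copsWin_of_winIn G c fun v => ⟨m, ?_⟩
  let B := Finset.univ.filter (fun u => Reach G m v u)
  have hall := (Finset.all_card_le_biUnion_card_iff_exists_injective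
    (fun u : B => Finset.univ.filter (fun i => Reach G m (c i) u))).1 (by
      intro s
      have h1 : (s.image (Subtype.val)).card ≤ M :=
        (Finset.card_le_card (by intro x hx; simp only [Finset.mem_image] at hx; obtain ⟨y, _, rfl⟩ := hx; exact y.2)).trans (hM v)
      have h2 := hc _ h1
      rw [Finset.card_image_of_injective _ Subtype.val_injective] at h2
      refine h2.trans (Finset.card_le_card ?_)
      intro i hi
      simp only [reachSet, Finset.mem_filter, Finset.mem_univ, true_and, Finset.mem_image] at hi
      obtain ⟨u, ⟨y, hy, rfl⟩, hu⟩ := hi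
      simp only [Finset.mem_biUnion, Finset.mem_filter, Finset.mem_univ, true_and]
      exact ⟨y, hy, hu⟩)
  obtain ⟨f, hf, hfm⟩ := hall
  have hB : ∀ u, u ∈ B ↔ Reach G m v u := by intro u; simp [B]
  have hv : v ∈ B := (hB v).2 (reach_refl G m v)
  refine winIn_of_assign G m c v (fun u => if h : u ∈ B then f ⟨u, h⟩ else f ⟨v, hv⟩) ?_ ?_
  · intro u u' hu hu' he
    have hu := (hB u).2 hu
    have hu' := (hB u').2 hu'
    simp only [hu, hu', dif_pos] at he
    exact congrArg Subtype.val (hf he)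
  · intro u hu
    have hu := (hB u).2 hu
    simp only [hu, dif_pos]
    have := hfm ⟨u, hu⟩
    simpa using this

open Classical in
theorem ball_card [Fintype V] (G : SimpleGraph V) (Δ : ℕ) (hΔ : 3 ≤ Δ)
    (hd : ∀ v : V, (G.neighborSet v).ncard ≤ Δ) (m : ℕ) (v : V) :
    (Finset.univ.filter (fun u => Reach G m v u)).card + 1 ≤ 2 * Δ ^ m := by
  induction m with
  | zero =>
    have : (Finset.univ.filter (fun u => Reach G 0 v u)) = {v} := by
      ext u
      rw [Finset.mem_filter, Finset.mem_singleton]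
      exact ⟨fun h => h.2.symm, fun h => ⟨Finset.mem_univ _, h.symm⟩⟩
    rw [this]; simp
  | succ m ih =>
    have hsub : (Finset.univ.filter (fun u => Reach G (m + 1) v u)) ⊆
        insert v ((Finset.univ.filter (fun u => Reach G m v u)).biUnion
          (fun y => (G.neighborSet y).toFinset)) := by
      intro u hu
      simp only [Finset.mem_filter, Finset.mem_univ, true_and] at hu
      rcases reach_last G m v u hu with rfl | ⟨y, hy, hyu⟩
      · simp
      · simp only [Finset.mem_insert, Finset.mem_biUnion, Finset.mem_filter, Finset.mem_univ,
          true_and, Set.mem_toFinset]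
        exact Or.inr ⟨y, hy, hyu⟩
    have h1 := (Finset.card_le_card hsub).trans (Finset.card_insert_le _ _)
    have h2 := Finset.card_biUnion_le_card_mul (Finset.univ.filter (fun u => Reach G m v u))
      (fun y => (G.neighborSet y).toFinset) Δ (by
        intro y _
        rw [← Set.ncard_eq_toFinset_card']; exact hd y)
    have h3 := Nat.mul_le_mul_right Δ ih
    rw [pow_succ]
    nlinarith

open Classical in
theorem expand [Fintype V] (G : SimpleGraph V) (Δ : ℕ) (hΔ : 3 ≤ Δ)
    (hd : ∀ v : V, (G.neighborSet v).ncard ≤ Δ) (ε : ℝ) (hε : ε ≤ isoperimetricNumber G)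
    (S : Finset V) (hS : S.Nonempty) (hn : (S.card : ℝ) ≤ (Fintype.card V : ℝ) / 2) :
    (1 + ε / Δ) * S.card ≤ (reachSet G 1 S).card := by
  have hpos : (0 : ℝ) < S.card := by exact_mod_cast hS.card_pos
  have h1 : ε ≤ ((edgeBoundary G (S : Set V)).ncard : ℝ) / S.card := by
    refine hε.trans (csInf_le ⟨0, ?_⟩ ⟨(S : Set V), by simpa using hS, by simpa using hn, by simp⟩)
    rintro x ⟨T, _, _, rfl⟩
    positivity
  rw [le_div_iff₀ hpos] at h1
  have hSsub : S ⊆ reachSet G 1 S := by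
    intro x hx
    simp only [reachSet, Finset.mem_filter, Finset.mem_univ, true_and]
    exact ⟨x, hx, reach_refl G 1 x⟩
  have h2 : (edgeBoundary G (S : Set V)).ncard ≤ (reachSet G 1 S \ S).card * Δ := by
    have hsub : edgeBoundary G (S : Set V) ⊆ (((reachSet G 1 S \ S).biUnion
        (fun v => (G.neighborSet v).toFinset.image (fun u => s(u, v))) : Finset (Sym2 V)) : Set (Sym2 V)) := by
      rintro e ⟨he, u, v, rfl, hu, hv⟩
      rw [SimpleGraph.mem_edgeSet] at he
      simp only [Finset.coe_biUnion, Set.mem_iUnion, Finset.mem_coe, Finset.mem_image, Set.mem_toFinset, Finset.mem_sdiff]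
      refine ⟨v, ⟨?_, by simpa using hv⟩, u, he.symm, rfl⟩
      simp only [reachSet, Finset.mem_filter, Finset.mem_univ, true_and]
      exact ⟨u, by simpa using hu, u, Or.inr he.symm, rfl⟩
    refine (Set.ncard_le_ncard hsub (Finset.finite_toSet _)).trans ?_
    rw [Set.ncard_coe_finset]
    refine Finset.card_biUnion_le_card_mul _ _ _ fun y _ => Finset.card_image_le.trans ?_
    rw [← Set.ncard_eq_toFinset_card']; exact hd y
  have h3 : (reachSet G 1 S \ S).card + S.card = (reachSet G 1 S).card :=
    Finset.card_sdiff_add_card_eq_card hSsub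
  have h2' : ((edgeBoundary G (S : Set V)).ncard : ℝ) ≤ ((reachSet G 1 S \ S).card : ℝ) * Δ := by
    exact_mod_cast h2
  have h3' : ((reachSet G 1 S \ S).card : ℝ) + S.card = (reachSet G 1 S).card := by
    exact_mod_cast h3
  have hΔ' : (0 : ℝ) < Δ := by
    have : 0 < Δ := by omega
    exact_mod_cast this
  have h4 : ε * S.card / Δ ≤ ((reachSet G 1 S \ S).card : ℝ) := by
    rw [div_le_iff₀ hΔ']; linarith
  have h5 : (1 + ε / Δ) * S.card = S.card + ε * S.card / Δ := by ring
  linarith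

theorem reachSet_succ [Fintype V] (G : SimpleGraph V) (m : ℕ) (A : Finset V) :
    reachSet G (m + 1) A = reachSet G 1 (reachSet G m A) := by
  classical
  ext x
  simp only [reachSet, Finset.mem_filter, Finset.mem_univ, true_and]
  constructor
  · rintro ⟨u, hu, y, hy, hyu⟩
    exact ⟨y, ⟨u, hu, hyu⟩, y, hy, rfl⟩
  · rintro ⟨y, ⟨u, hu, hyu⟩, z, hz, rfl⟩
    exact ⟨u, hu, z, hz, hyu⟩

theorem subset_reachSet [Fintype V] (G : SimpleGraph V) (m : ℕ) (A : Finset V) :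
    A ⊆ reachSet G m A := by
  classical
  intro x hx
  simp only [reachSet, Finset.mem_filter, Finset.mem_univ, true_and]
  exact ⟨x, hx, reach_refl G m x⟩

theorem expand_iter [Fintype V] (G : SimpleGraph V) (Δ : ℕ) (hΔ : 3 ≤ Δ)
    (hd : ∀ v : V, (G.neighborSet v).ncard ≤ Δ) (ε : ℝ) (hε0 : 0 < ε)
    (hε : ε ≤ isoperimetricNumber G)
    (S : Finset V) (hS : S.Nonempty) (m : ℕ) :
    (1 + ε / Δ) ^ m * S.card ≤ (reachSet G m S).card ∨
      (Fintype.card V : ℝ) / 2 ≤ (reachSet G m S).card := by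
  classical
  induction m with
  | zero =>
    left
    simpa using Finset.card_le_card (subset_reachSet G 0 S)
  | succ m ih =>
    rw [reachSet_succ]
    set T := reachSet G m S with hT
    have hmono : (T.card : ℝ) ≤ (reachSet G 1 T).card := by
      exact_mod_cast Finset.card_le_card (subset_reachSet G 1 T)
    by_cases hn : (T.card : ℝ) ≤ (Fintype.card V : ℝ) / 2
    · rcases ih with ih | ih
      · left
        refine le_trans ?_ (expand G Δ hΔ hd ε hε T (hS.mono (subset_reachSet G m S)) hn)
        rw [pow_succ, mul_comm (_ ^ m), mul_assoc]
        gcongr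
      · right; linarith
    · right; linarith

open Classical in
theorem exists_good [Fintype V] [Nonempty V] (k M : ℕ) (T : Finset V → Finset V) (L : ℝ)
    (hL : 4 * (Fintype.card V : ℝ) ≤ Real.exp L)
    (hT : ∀ A : Finset V, A.Nonempty → A.card ≤ M →
      L * A.card ≤ k * (T A).card / (2 * Fintype.card V)) :
    ∃ c : Fin k → V, ∀ A : Finset V, A.card ≤ M →
      A.card ≤ (Finset.univ.filter (fun i => c i ∈ T A)).card := by
  by_contra hcon
  push Not at hcon
  set n : ℝ := (Fintype.card V : ℝ) with hn
  have hnpos : 0 < n := by rw [hn]; exact_mod_cast Fintype.card_pos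
  let w : Finset V → (Fin k → V) → ℝ := fun A c =>
    2 ^ A.card * ∏ i, (if c i ∈ T A then (1 / 2 : ℝ) else 1)
  let F : Finset (Finset V) := Finset.univ.filter (fun A => A.Nonempty ∧ A.card ≤ M)
  have hw0 : ∀ A c, 0 ≤ w A c := by
    intro A c
    refine mul_nonneg (by positivity) (Finset.prod_nonneg fun i _ => ?_)
    split_ifs <;> norm_num
  have h1 : ∀ c, 1 ≤ ∑ A ∈ F, w A c := by
    intro c
    obtain ⟨A, hAM, hA⟩ := hcon c
    have hAF : A ∈ F := by
      simp only [F, Finset.mem_filter, Finset.mem_univ, true_and]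
      exact ⟨Finset.card_pos.1 (by omega), hAM⟩
    refine le_trans ?_ (Finset.single_le_sum (fun A _ => hw0 A c) hAF)
    simp only [w]
    rw [Finset.prod_ite]
    simp only [Finset.prod_const, one_pow, mul_one]
    set h := (Finset.univ.filter (fun i => c i ∈ T A)).card
    rw [one_div, inv_pow, ← div_eq_mul_inv, one_le_div (by positivity)]
    exact pow_le_pow_right₀ (by norm_num) hA.le
  have h2 : ∀ A ∈ F, ∑ c, w A c ≤ n ^ k * (1 / (2 * n)) ^ A.card := by
    intro A hA
    simp only [F, Finset.mem_filter, Finset.mem_univ, true_and] at hA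
    have hs : ∑ c, w A c = 2 ^ A.card * (n - (T A).card / 2) ^ k := by
      simp only [w]
      rw [← Finset.mul_sum]
      congr 1
      rw [← Fintype.sum_pow (fun v => if v ∈ T A then (1 / 2 : ℝ) else 1) k]
      congr 1
      have hv : ∀ v : V, (if v ∈ T A then (1 / 2 : ℝ) else 1) =
          1 - (if v ∈ T A then (1 / 2 : ℝ) else 0) := by
        intro v; split_ifs <;> norm_num
      simp only [hv]
      rw [Finset.sum_sub_distrib, ← Finset.sum_filter]
      simp only [Finset.sum_const, Finset.card_univ, nsmul_eq_mul, mul_one, ← hn]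
      rw [Finset.filter_mem_eq_inter, Finset.univ_inter]
      ring
    rw [hs]
    have ht : ((T A).card : ℝ) ≤ n := by rw [hn]; exact_mod_cast Finset.card_le_univ _
    have e1 : n - (T A).card / 2 ≤ n * Real.exp (-((T A).card / (2 * n))) := by
      have := Real.add_one_le_exp (-((T A).card / (2 * n)))
      calc n - (T A).card / 2 = n * (-((T A).card / (2 * n)) + 1) := by field_simp; ring
        _ ≤ _ := by gcongr
    have e2 : (n - (T A).card / 2) ^ k ≤ n ^ k * Real.exp (-L) ^ A.card := by
      calc (n - (T A).card / 2) ^ k ≤ (n * Real.exp (-((T A).card / (2 * n)))) ^ k :=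
            pow_le_pow_left₀ (by linarith) e1 k
        _ = n ^ k * Real.exp (-(k * (T A).card / (2 * n))) := by
            rw [mul_pow, ← Real.exp_nat_mul]; congr 2; ring
        _ ≤ n ^ k * Real.exp (-(L * A.card)) := by
            gcongr
            exact hT A hA.1 hA.2
        _ = _ := by rw [← Real.exp_nat_mul]; congr 2; ring
    have e3 : Real.exp (-L) ≤ 1 / (4 * n) := by
      rw [Real.exp_neg, ← one_div]
      exact one_div_le_one_div_of_le (by positivity) hL
    calc 2 ^ A.card * (n - (T A).card / 2) ^ k
        ≤ 2 ^ A.card * (n ^ k * (1 / (4 * n)) ^ A.card) := by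
          gcongr
          exact e2.trans (by gcongr)
      _ = n ^ k * (1 / (2 * n)) ^ A.card := by
          rw [mul_left_comm, ← mul_pow]; congr 2; field_simp; norm_num
  have h3 : n ^ k ≤ ∑ A ∈ F, n ^ k * (1 / (2 * n)) ^ A.card := by
    calc n ^ k = ∑ c : Fin k → V, (1 : ℝ) := by simp [hn]
      _ ≤ ∑ c, ∑ A ∈ F, w A c := Finset.sum_le_sum fun c _ => h1 c
      _ = ∑ A ∈ F, ∑ c, w A c := Finset.sum_comm
      _ ≤ _ := Finset.sum_le_sum h2
  rw [← Finset.mul_sum] at h3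
  have h4 : (1 : ℝ) ≤ ∑ A ∈ F, (1 / (2 * n)) ^ A.card := by
    have : 0 < n ^ k := by positivity
    by_contra hlt
    push Not at hlt
    nlinarith
  have h5 : 1 + ∑ A ∈ F, (1 / (2 * n)) ^ A.card ≤ (1 / (2 * n) + 1) ^ Fintype.card V := by
    have h51 : (∑ A : Finset V, (1 / (2 * n)) ^ A.card) = (1 / (2 * n) + 1) ^ Fintype.card V := by
      have := Finset.sum_pow_mul_eq_add_pow (1 / (2 * n)) 1 (Finset.univ : Finset V)
      simpa using this
    rw [← h51]
    have hnot : (∅ : Finset V) ∉ F := by simp [F]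
    have := Finset.sum_insert (f := fun A : Finset V => (1 / (2 * n)) ^ A.card) hnot
    simp only [Finset.card_empty, pow_zero] at this
    rw [← this]
    exact Finset.sum_le_sum_of_subset_of_nonneg (Finset.subset_univ _) (fun _ _ _ => by positivity)
  have h6 : (1 / (2 * n) + 1) ^ Fintype.card V ≤ Real.exp (1 / 2) := by
    calc (1 / (2 * n) + 1) ^ Fintype.card V ≤ Real.exp (1 / (2 * n)) ^ Fintype.card V := by
          gcongr; exact Real.add_one_le_exp _
      _ = Real.exp (1 / 2) := by
          rw [← Real.exp_nat_mul, ← hn]; congr 1; field_simp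
  have h7 : Real.exp (1 / 2) < 2 := by
    have := Real.exp_one_lt_d9
    have h8 : Real.exp (1 / 2) * Real.exp (1 / 2) = Real.exp 1 := by
      rw [← Real.exp_add]; norm_num
    nlinarith [Real.exp_pos (1 / 2)]
  linarith

theorem copNumber_le_aux [Fintype V] (G : SimpleGraph V) (hG : G.Connected) (Δ : ℕ) (hΔ : 3 ≤ Δ)
    (hd : ∀ v : V, (G.neighborSet v).ncard ≤ Δ) (ε : ℝ) (hε0 : 0 < ε)
    (hεΔ : ε ≤ (Δ : ℝ) - 2)
    (hε : ε ≤ isoperimetricNumber G) (r k : ℕ)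
    (hr : 4 * ((Δ : ℝ) - 1) ^ (2 * r) ≤ Fintype.card V)
    (hk : 2 * (Fintype.card V : ℝ) * Real.log (4 * Fintype.card V) ≤ k * (1 + ε / Δ) ^ r) :
    copNumber G ≤ k := by
  classical
  have := hG.nonempty
  refine Nat.sInf_le ?_
  set n : ℝ := (Fintype.card V : ℝ) with hn
  have hn1 : 1 ≤ n := by rw [hn]; exact_mod_cast Fintype.card_pos
  have hΔ' : (3 : ℝ) ≤ Δ := by exact_mod_cast hΔ
  obtain ⟨c, hc⟩ := exists_good (V := V) k (2 * Δ ^ r) (reachSet G r) (Real.log (4 * n))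
    (by rw [Real.exp_log (by positivity)]) (by
      intro A hA hAM
      have key : (1 + ε / Δ) ^ r * A.card ≤ (reachSet G r A).card := by
        rcases expand_iter G Δ hΔ hd ε hε0 hε A hA r with h | h
        · exact h
        · refine le_trans ?_ h
          have hAM' : (A.card : ℝ) ≤ 2 * (Δ : ℝ) ^ r := by exact_mod_cast hAM
          calc (1 + ε / Δ) ^ r * A.card ≤ (1 + ε / Δ) ^ r * (2 * (Δ : ℝ) ^ r) := by gcongr
            _ = 2 * (Δ + ε) ^ r := by
              rw [mul_left_comm, ← mul_pow]; congr 2; field_simp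
            _ ≤ 2 * (((Δ : ℝ) - 1) ^ 2) ^ r := by
              gcongr; nlinarith
            _ ≤ n / 2 := by rw [← pow_mul]; linarith
      rw [le_div_iff₀ (by positivity)]
      calc Real.log (4 * n) * A.card * (2 * n) = (2 * n * Real.log (4 * n)) * A.card := by ring
        _ ≤ (k * (1 + ε / Δ) ^ r) * A.card := by gcongr
        _ = k * ((1 + ε / Δ) ^ r * A.card) := by ring
        _ ≤ _ := by gcongr)
  exact copsWin_of_hall G r (2 * Δ ^ r) c
    (fun v => by have := ball_card G Δ hΔ hd r v; omega) hc

/-- Let `Δ ≥ 3` and `0 < ε ≤ Δ - 2`.  Then for every `δ > 0`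
there is `n₀` such that every finite connected graph `G` with maximum degree at
most `Δ`, order `n ≥ n₀`, and isoperimetric number `h(G) ≥ ε` satisfies
`c(G) ≤ n ^ (1 - (1/2) log_{Δ-1}(1 + ε/Δ) + δ)`. -/
theorem copNumber_le_of_isoperimetric (Δ : ℕ) (hΔ : 3 ≤ Δ) (ε : ℝ)
    (hε0 : 0 < ε) (hεΔ : ε ≤ (Δ : ℝ) - 2) :
    ∀ δ : ℝ, 0 < δ → ∃ n₀ : ℕ, ∀ (W : Type) [Fintype W] (G : SimpleGraph W),
      G.Connected → (∀ v : W, (G.neighborSet v).ncard ≤ Δ) →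
      n₀ ≤ Fintype.card W → ε ≤ isoperimetricNumber G →
      (copNumber G : ℝ) ≤
        (Fintype.card W : ℝ) ^ (1 - (1 / 2) * Real.logb ((Δ : ℝ) - 1) (1 + ε / Δ) + δ) := by
  intro δ hδ
  set b : ℝ := (Δ : ℝ) - 1 with hb
  set β : ℝ := 1 + ε / Δ with hβ
  set l : ℝ := Real.logb b β with hl
  have hΔ' : (3 : ℝ) ≤ Δ := by exact_mod_cast hΔ
  have hb2 : 2 ≤ b := by rw [hb]; linarith
  have hβ1 : 1 < β := by
    have : 0 < ε / Δ := by positivity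
    rw [hβ]; linarith
  have hβb : β ≤ b := by
    have : ε / Δ ≤ 1 := by rw [div_le_one (by linarith)]; linarith
    linarith
  have hl0 : 0 < l := Real.logb_pos (by linarith) hβ1
  have hl1 : l ≤ 1 := by
    have := Real.logb_le_logb_of_le (b := b) (by linarith) (by linarith) hβb
    rwa [Real.logb_self_eq_one (by linarith)] at this
  have hbl : b ^ l = β := Real.rpow_logb (by linarith) (by linarith) (by linarith)
  -- asymptotics
  have hlim : ∀ᶠ x : ℝ in Filter.atTop,
      2 * x * Real.log (4 * x) * (β * (4 : ℝ) ^ (l / 2) * x ^ (-(l / 2))) + 1 ≤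
        x ^ (1 - (1 / 2) * l + δ) := by
    have ho := (isLittleO_log_rpow_atTop (half_pos hδ)).bound
      (c := 1) one_pos
    have ht := (tendsto_rpow_atTop (half_pos hδ)).eventually_ge_atTop
      (2 * (β * (4 : ℝ) ^ (l / 2)) * (Real.log 4 + 1) + 1)
    filter_upwards [ho, ht, Filter.eventually_ge_atTop 1] with x h1 h2 h3
    have hx : 0 < x := by linarith
    have hlog : 0 ≤ Real.log x := Real.log_nonneg h3
    rw [Real.norm_of_nonneg hlog, Real.norm_of_nonneg (by positivity), one_mul] at h1
    have h4 : 1 ≤ x ^ (δ / 2) := Real.one_le_rpow h3 (by linarith)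
    have hl4 : 0 ≤ Real.log 4 := Real.log_nonneg (by norm_num)
    have h5 : Real.log (4 * x) ≤ (Real.log 4 + 1) * x ^ (δ / 2) := by
      rw [Real.log_mul (by norm_num) hx.ne']; nlinarith
    have h6 : x ^ (1 - (1 / 2) * l + δ) = (x * x ^ (-(l / 2))) * x ^ (δ / 2) * x ^ (δ / 2) := by
      rw [← Real.rpow_one_add' hx.le (by linarith), ← Real.rpow_add hx, ← Real.rpow_add hx]
      congr 1; ring
    have h7 : 1 ≤ x * x ^ (-(l / 2)) := by
      rw [← Real.rpow_one_add' hx.le (by linarith)]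
      exact Real.one_le_rpow h3 (by linarith)
    rw [h6]
    set y := x ^ (δ / 2)
    set z := x * x ^ (-(l / 2)) with hz
    set C := β * (4 : ℝ) ^ (l / 2) with hC
    have hC0 : 0 < C := by positivity
    calc 2 * x * Real.log (4 * x) * (C * x ^ (-(l / 2))) + 1
        = 2 * z * C * Real.log (4 * x) + 1 := by rw [hz]; ring
      _ ≤ 2 * z * C * ((Real.log 4 + 1) * y) + z * y := by
          have : 1 ≤ z * y := one_le_mul_of_one_le_of_one_le h7 h4
          gcongr
      _ = z * y * (2 * C * (Real.log 4 + 1) + 1) := by ring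
      _ ≤ z * y * y := by gcongr
  obtain ⟨x₀, hx₀⟩ := Filter.eventually_atTop.1 hlim
  refine ⟨max 4 ⌈x₀⌉₊, ?_⟩
  intro W _ G hG hd hn hε
  have hx := hx₀ (Fintype.card W) ((Nat.le_ceil x₀).trans
    (by exact_mod_cast (le_max_right _ _).trans hn))
  have hn4 : (4 : ℝ) ≤ Fintype.card W := by exact_mod_cast (le_max_left _ _).trans hn
  set n : ℝ := (Fintype.card W : ℝ) with hnn
  obtain ⟨r, hr1, hr2⟩ := exists_nat_pow_near (x := n / 4) (y := b ^ 2)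
    (by linarith) (by nlinarith)
  have hq : (n / 4) ^ (l / 2) ≤ β ^ (r + 1) := by
    calc (n / 4) ^ (l / 2) ≤ ((b ^ 2) ^ (r + 1)) ^ (l / 2) := by
          gcongr
      _ = β ^ (r + 1) := by
          have hb0 : 0 ≤ b := by linarith
          rw [← hbl, ← pow_mul, ← Real.rpow_natCast, ← Real.rpow_natCast,
            ← Real.rpow_mul hb0, ← Real.rpow_mul hb0]
          congr 1; push_cast; ring
  have hlog : 0 ≤ Real.log (4 * n) := Real.log_nonneg (by linarith)
  have hβr : 0 < β ^ r := by positivity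
  have hinv : (β ^ r)⁻¹ ≤ β * (4 : ℝ) ^ (l / 2) * n ^ (-(l / 2)) := by
    rw [Real.div_rpow (by linarith) (by norm_num), div_le_iff₀ (by positivity), pow_succ] at hq
    rw [Real.rpow_neg (by linarith), ← div_eq_mul_inv, le_div_iff₀ (by positivity),
      inv_mul_le_iff₀ hβr]
    linarith
  have hcop := copNumber_le_aux G hG Δ hΔ hd ε hε0 hεΔ hε r
    ⌈2 * n * Real.log (4 * n) * (β ^ r)⁻¹⌉₊
    (by rw [pow_mul]; linarith)
    (by
      rw [← div_le_iff₀ hβr, div_eq_mul_inv]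
      exact Nat.le_ceil _)
  calc (copNumber G : ℝ) ≤ (⌈2 * n * Real.log (4 * n) * (β ^ r)⁻¹⌉₊ : ℝ) := by exact_mod_cast hcop
    _ ≤ 2 * n * Real.log (4 * n) * (β ^ r)⁻¹ + 1 := (Nat.ceil_lt_add_one (by positivity)).le
    _ ≤ 2 * n * Real.log (4 * n) * (β * (4 : ℝ) ^ (l / 2) * n ^ (-(l / 2))) + 1 := by gcongr
    _ ≤ _ := hx
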